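/- Converse part of Theorem 7 (cyclic graph with two-sided h-neighbor privacy): for every integer N ≥ 3, every h ∈ {0,1,…,⌊(N−3)/2⌋}, and every PIR scheme with cyclic-graph storage on N servers and privacy sets 𝒫_n equal to the cyclic interval of indices [n−h−1 : n+h] (taken modulo N), the total download cost satisfies Σ_{k=1}^{N} D_k ≥ (h+2)·N·L; equivalently, the rate satisfies R ≤ 1/(h+2). -/

import Mathlib

/-!
Why the bound holds. Let `𝒬` be the tuple of all queries, and for server `n` put
`y n = H(A n | W n, 𝒬)` and `x n = H(A n | W (n-1), 𝒬)`. By privacy these do not depend on which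
message of `𝒫_n` is being retrieved (`aS_eq`), so they are taken at message `n`.

* Only servers `k` and `k + 1` store `W k`; given all other messages, their answers still have to
  convey it, so `L ≤ x k + y (k+1)` (`L_le_xS_add_yS`). Summing, `∑ (x n + y n) ≥ N L`.
* The download for message `k` is at least `L` plus the interference `H(answers | W k, 𝒬)`
  (`D_ge`). The servers `k-h, …, k+h+1`, which are those whose privacy set contains `k`, have
  their storage completed one at a time when `W (k-1), …, W (k-h-1)` and then
  `W (k+1), …, W (k+h+1)` are revealed after `W k`. Since `2h + 3 ≤ N`, these messages are
  distinct, hence independent, and the interference is at least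
  `∑_{i ≤ h} (y (k-i) + x (k+1+i))` (`interference`).

Summing the second bound over `k` gives `∑ D k ≥ N L + (h+1) ∑ (x n + y n) ≥ (h+2) N L`.

Entropy is handled through partitions of the sample space: `ent r` is the entropy of the partition
into classes of a setoid `r`, a joint variable corresponds to an infimum of setoids, and
monotonicity (`ent_anti`) and submodularity (`ent_submod`) are the only Shannon inequalities used.
-/


/-!
Formalization of PIR with arbitrary privacy requirement sets.

A PIR scheme with `N` servers and `K` messages of equal length `L > 0` is modeled
by finitely-valued random variables on a common finite probability space:
messages `W 1, …, W K`, and for each server `n ∈ [1:N]` and desired index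
`k ∈ [1:K]`, a query `Q n k` and an answer `A n k`.  Shannon entropy,
conditional entropy and (conditional) mutual information are defined from the
probability mass function `p`.
-/

open scoped Classical BigOperators

noncomputable section

/-- A PIR scheme: a finite probability space together with the message, query and
answer random variables.  Only the variables indexed by `n ∈ [1:N]`, `k ∈ [1:K]`
are meaningful; all random variables are finitely valued (`ℕ`-valued on a finite
sample space). -/
structure PIRScheme (N K : ℕ) (L : ℝ) where
  /-- the sample space -/
  Ω : Type
  [fin : Fintype Ω]
  /-- the probability mass function -/
  p : Ω → ℝ
  p_nonneg : ∀ ω, 0 ≤ p ω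
  p_sum : ∑ ω : Ω, p ω = 1
  /-- the messages `W i`, `i ∈ [1:K]` -/
  W : ℕ → Ω → ℕ
  /-- `Q n k` is the query sent to server `n` when retrieving message `k` -/
  Q : ℕ → ℕ → Ω → ℕ
  /-- `A n k` is the answer of server `n` when retrieving message `k` -/
  A : ℕ → ℕ → Ω → ℕ

attribute [instance] PIRScheme.fin

namespace PIRScheme

variable {N K : ℕ} {L : ℝ} (S : PIRScheme N K L)

/-- `P[X = v]`. -/
def prob {α : Type*} (X : S.Ω → α) (v : α) : ℝ :=
  ∑ ω : S.Ω, if X ω = v then S.p ω else 0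

/-- Shannon entropy `H(X)`. -/
def H {α : Type*} (X : S.Ω → α) : ℝ :=
  - ∑ ω : S.Ω, S.p ω * Real.log (S.prob X (X ω))

/-- Conditional entropy `H(X | Y) := H(X, Y) - H(Y)`. -/
def Hc {α β : Type*} (X : S.Ω → α) (Y : S.Ω → β) : ℝ :=
  S.H (fun ω => (X ω, Y ω)) - S.H Y

/-- Mutual information `I(X ; Y) := H(X) + H(Y) - H(X, Y)`. -/
def MI {α β : Type*} (X : S.Ω → α) (Y : S.Ω → β) : ℝ :=
  S.H X + S.H Y - S.H (fun ω => (X ω, Y ω))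

/-- Conditional mutual information `I(X ; Y | Z) := H(X|Z) + H(Y|Z) - H(X,Y|Z)`. -/
def MIc {α β γ : Type*} (X : S.Ω → α) (Y : S.Ω → β) (Z : S.Ω → γ) : ℝ :=
  S.Hc X Z + S.Hc Y Z - S.Hc (fun ω => (X ω, Y ω)) Z

/-- The joint random variable `(W j)_{j ∈ T}` of a subcollection of the messages. -/
def jointW (T : Finset ℕ) : S.Ω → (T → ℕ) := fun ω j => S.W j ω

/-- The joint random variable of all `K` messages. -/
def allW : S.Ω → (Finset.Icc 1 K → ℕ) := S.jointW (Finset.Icc 1 K)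

/-- `𝒬`: the tuple of all queries `Q n k`, `n ∈ [1:N]`, `k ∈ [1:K]`. -/
def allQ : S.Ω → ((Finset.Icc 1 N ×ˢ Finset.Icc 1 K : Finset (ℕ × ℕ)) → ℕ) :=
  fun ω x => S.Q x.1.1 x.1.2 ω

/-- The tuple of answers `(A 1 k, …, A N k)` when retrieving message `k`. -/
def ansVec (k : ℕ) : S.Ω → (Finset.Icc 1 N → ℕ) := fun ω n => S.A n k ω

/-- The download cost `D k := ∑_{n=1}^N H(A n k)`. -/
def D (k : ℕ) : ℝ := ∑ n ∈ Finset.Icc 1 N, S.H (S.A n k)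

/-- The rate `R := K ⬝ L / ∑_{k=1}^K D k`. -/
def rate : ℝ := (K * L) / ∑ k ∈ Finset.Icc 1 K, S.D k

/-- Validity of a PIR scheme with respect to storage index sets `I n` and privacy
requirement sets `P n`:
(messages) the messages each have entropy `L` and are mutually independent;
(i) the messages are independent of all the queries;
(ii) each answer is a function of the server's storage and received query;
(iii) privacy: for all `θ1, θ2 ∈ P n` and every subcollection `T` of the messages,
  the answer of server `n` has the same conditional entropy whether `θ1` or `θ2`
  is being retrieved;
(iv) decodability: message `k` is determined by all the answers and the queries. -/
structure IsValid (S : PIRScheme N K L) (I P : ℕ → Finset ℕ) : Prop where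
  msg_entropy : ∀ i ∈ Finset.Icc 1 K, S.H (S.W i) = L
  msg_indep : S.H S.allW = ∑ i ∈ Finset.Icc 1 K, S.H (S.W i)
  stor_sub_priv : ∀ n ∈ Finset.Icc 1 N, I n ⊆ P n
  priv_sub : ∀ n ∈ Finset.Icc 1 N, P n ⊆ Finset.Icc 1 K
  query_indep : S.MI S.allW S.allQ = 0
  ans_det : ∀ n ∈ Finset.Icc 1 N, ∀ k ∈ Finset.Icc 1 K,
    S.Hc (S.A n k) (fun ω => (S.jointW (I n) ω, S.Q n k ω)) = 0
  privacy : ∀ n ∈ Finset.Icc 1 N, ∀ θ1 ∈ P n, ∀ θ2 ∈ P n, ∀ T ⊆ Finset.Icc 1 K,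
    S.Hc (S.A n θ1) (fun ω => (S.jointW T ω, S.allQ ω)) =
      S.Hc (S.A n θ2) (fun ω => (S.jointW T ω, S.allQ ω))
  decodable : ∀ k ∈ Finset.Icc 1 K, S.Hc (S.W k) (fun ω => (S.ansVec k ω, S.allQ ω)) = 0

end PIRScheme

/-- Path-graph storage on `N` servers (`K = N - 1` messages):
`𝒲_1 = {W 1}`, `𝒲_n = {W (n-1), W n}` for `2 ≤ n ≤ N - 1`, `𝒲_N = {W (N-1)}`. -/
def pathIndex (N : ℕ) : ℕ → Finset ℕ := fun n =>
  if n = 1 then {1} else if n = N then {N - 1} else {n - 1, n}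

/-- Modified-edge-server privacy sets on the path graph:
`𝒫_1 = 𝒫_2 = {1, 2}`, `𝒫_N = 𝒫_{N-1} = {N-2, N-1}`, and `𝒫_n = {n-1, n}`
for `2 ≤ n ≤ N - 1`. -/
def pathModEdgePriv (N : ℕ) : ℕ → Finset ℕ := fun n =>
  if n ≤ 2 then {1, 2} else if N - 1 ≤ n then {N - 2, N - 1} else {n - 1, n}

/-- The representative of `m` modulo `N` lying in `{1, …, N}` (so that index `0`
is identified with index `N`). -/
def cyc (N : ℕ) (m : ℤ) : ℕ := (((m - 1) % (N : ℤ)) + 1).toNat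

/-- Cyclic-graph storage on `N` servers (`K = N` messages):
`𝒲_n = {W (n-1), W n}` with indices mod `N`, i.e. `ℐ_n = {n - 1, n} (mod N)`. -/
def cycIndex (N : ℕ) : ℕ → Finset ℕ := fun n => {cyc N ((n : ℤ) - 1), cyc N (n : ℤ)}

/-- The cyclic interval `[a : a + len - 1]` of `len` consecutive indices mod `N`,
as a subset of `{1, …, N}`. -/
def cycInterval (N : ℕ) (a : ℤ) (len : ℕ) : Finset ℕ :=
  (Finset.range len).image fun j => cyc N (a + j)

/-! ### Shannon inequalities for partitions -/

namespace PIRScheme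

variable {N K : ℕ} {L : ℝ} (S : PIRScheme N K L)

/-- The probability of the class of `ω` under the equivalence relation `r`. -/
def cls (r : Setoid S.Ω) (ω : S.Ω) : ℝ := ∑ ω' : S.Ω, if r ω' ω then S.p ω' else 0

/-- The entropy of the partition of the sample space into the classes of `r`. A random variable
`X` enters through `Setoid.ker X`, and a joint variable is then an infimum of setoids. -/
def ent (r : Setoid S.Ω) : ℝ := - ∑ ω : S.Ω, S.p ω * Real.log (S.cls r ω)

/-- The conditional entropy of the partition `r` given the partition `s`. -/
def entc (r s : Setoid S.Ω) : ℝ := S.ent (r ⊓ s) - S.ent s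

lemma H_eq {α : Type*} (X : S.Ω → α) : S.H X = S.ent (Setoid.ker X) := rfl

lemma ker_prod {Ω α β : Type*} (X : Ω → α) (Y : Ω → β) :
    Setoid.ker (fun ω => (X ω, Y ω)) = Setoid.ker X ⊓ Setoid.ker Y := by
  ext a b
  simp [Setoid.ker_def, Setoid.inf_def]

lemma Hc_eq {α β : Type*} (X : S.Ω → α) (Y : S.Ω → β) :
    S.Hc X Y = S.entc (Setoid.ker X) (Setoid.ker Y) := by
  simp only [Hc, entc, H_eq, ker_prod]

lemma ker_pi {Ω α : Type*} (X : ℕ → Ω → α) (T : Finset ℕ) :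
    Setoid.ker (fun ω (j : T) => X j ω) = T.inf (fun j => Setoid.ker (X j)) := by
  ext a b
  have key : ∀ U : Finset ℕ, (U.inf (fun j => Setoid.ker (X j))) a b ↔ ∀ j ∈ U, X j a = X j b := by
    intro U
    induction U using Finset.induction_on with
    | empty => exact iff_of_true trivial (by simp)
    | insert i U hi ih =>
      rw [Finset.inf_insert, Finset.forall_mem_insert, ← ih]
      rfl
  rw [key, Setoid.ker_def, funext_iff]
  simp

lemma cls_congr (r : Setoid S.Ω) {a b : S.Ω} (h : r a b) : S.cls r a = S.cls r b := by
  refine Finset.sum_congr rfl fun ω _ => ?_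
  have : r ω a ↔ r ω b := ⟨fun h' => r.trans h' h, fun h' => r.trans h' (r.symm h)⟩
  simp only [this]

lemma cls_nonneg (r : Setoid S.Ω) (a : S.Ω) : 0 ≤ S.cls r a :=
  Finset.sum_nonneg fun ω _ => by split_ifs; exacts [S.p_nonneg ω, le_rfl]

lemma p_le_cls (r : Setoid S.Ω) (a : S.Ω) : S.p a ≤ S.cls r a := by
  have := Finset.single_le_sum (f := fun ω' => if r ω' a then S.p ω' else 0)
    (fun ω _ => by split_ifs; exacts [S.p_nonneg ω, le_rfl]) (Finset.mem_univ a)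
  simpa [cls, r.refl a] using this

lemma cls_mono {r s : Setoid S.Ω} (h : r ≤ s) (a : S.Ω) : S.cls r a ≤ S.cls s a := by
  refine Finset.sum_le_sum fun ω _ => ?_
  by_cases h1 : r ω a
  · simp [h1, h h1]
  · simp only [h1, if_false]
    split_ifs
    exacts [S.p_nonneg ω, le_rfl]

lemma ent_anti {r s : Setoid S.Ω} (h : r ≤ s) : S.ent s ≤ S.ent r := by
  refine neg_le_neg (Finset.sum_le_sum fun ω _ => ?_)
  rcases (S.p_nonneg ω).eq_or_lt with h0 | h0
  · simp [← h0]
  · exact mul_le_mul_of_nonneg_left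
      (Real.log_le_log (h0.trans_le (S.p_le_cls r ω)) (S.cls_mono h ω)) h0.le

lemma ent_top : S.ent ⊤ = 0 := by
  have : ∀ ω, S.cls ⊤ ω = 1 := fun ω => by simp [cls, Setoid.top_def, S.p_sum]
  simp [ent, this]

/-- The points `ω` that are `r`-related to `a` and `s`-related to `b` form an empty set or a
single class of `r ⊓ s`, so their conditional weights add up to at most `1`. -/
lemma sum_block_le (r s : Setoid S.Ω) (a b : S.Ω) :
    ∑ ω, (if r a ω ∧ s b ω then S.p ω / S.cls (r ⊓ s) ω else 0) ≤ 1 := by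
  by_cases h : ∃ c, r a c ∧ s b c
  · obtain ⟨c, hc1, hc2⟩ := h
    have : ∀ ω, (if r a ω ∧ s b ω then S.p ω / S.cls (r ⊓ s) ω else 0)
        = (if (r ⊓ s) ω c then S.p ω else 0) / S.cls (r ⊓ s) c := by
      intro ω
      have hiff : (r a ω ∧ s b ω) ↔ (r ⊓ s) ω c :=
        ⟨fun h => ⟨r.trans (r.symm h.1) hc1, s.trans (s.symm h.2) hc2⟩,
          fun h => ⟨r.trans hc1 (r.symm h.1), s.trans hc2 (s.symm h.2)⟩⟩
      by_cases hj : (r ⊓ s) ω c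
      · rw [if_pos (hiff.2 hj), if_pos hj, S.cls_congr (r ⊓ s) hj]
      · rw [if_neg (fun h => hj (hiff.1 h)), if_neg hj, zero_div]
    rw [Finset.sum_congr rfl fun ω _ => this ω, ← Finset.sum_div]
    exact div_self_le_one _
  · rw [Finset.sum_eq_zero]
    · exact zero_le_one
    · intro ω _
      exact if_neg fun hω => h ⟨ω, hω⟩

/-- The expectation of `P_r P_s / (P_{r ⊓ s} P_t)` is at most `1`: expand `P_r` and `P_s` into
sums over points `a` and `b`, and sum over `ω` first by `sum_block_le`. Terms with `a` and `b` in
different classes of `t` vanish. -/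
lemma sum_ratio_le (r s t : Setoid S.Ω) (hr : r ≤ t) (hs : s ≤ t) :
    ∑ ω, S.p ω * (S.cls r ω * S.cls s ω / (S.cls (r ⊓ s) ω * S.cls t ω)) ≤ 1 := by
  have e1 : ∀ ω, S.p ω * (S.cls r ω * S.cls s ω / (S.cls (r ⊓ s) ω * S.cls t ω))
      = ∑ a, ∑ b, S.p ω * ((if r a ω then S.p a else 0) * (if s b ω then S.p b else 0)
          / (S.cls (r ⊓ s) ω * S.cls t ω)) := by
    intro ω
    rw [cls, cls, Finset.sum_mul_sum, Finset.sum_div, Finset.mul_sum]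
    refine Finset.sum_congr rfl fun a _ => ?_
    rw [Finset.sum_div, Finset.mul_sum]
  rw [Finset.sum_congr rfl fun ω _ => e1 ω, Finset.sum_comm]
  have e2 : ∀ a, (∑ ω, ∑ b, S.p ω * ((if r a ω then S.p a else 0) * (if s b ω then S.p b else 0)
      / (S.cls (r ⊓ s) ω * S.cls t ω))) ≤ S.p a := by
    intro a
    rw [Finset.sum_comm]
    have e3 : ∀ b, (∑ ω, S.p ω * ((if r a ω then S.p a else 0) * (if s b ω then S.p b else 0)
        / (S.cls (r ⊓ s) ω * S.cls t ω))) ≤ S.p a / S.cls t a * (if t b a then S.p b else 0) := by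
      intro b
      have hnn : 0 ≤ S.p a / S.cls t a * S.p b :=
        mul_nonneg (div_nonneg (S.p_nonneg a) (S.cls_nonneg t a)) (S.p_nonneg b)
      by_cases hab : t b a
      · rw [if_pos hab]
        calc _ = ∑ ω, S.p a / S.cls t a * S.p b *
              (if r a ω ∧ s b ω then S.p ω / S.cls (r ⊓ s) ω else 0) := by
              refine Finset.sum_congr rfl fun ω _ => ?_
              by_cases h1 : r a ω
              · by_cases h2 : s b ω
                · rw [if_pos h1, if_pos h2, if_pos ⟨h1, h2⟩, S.cls_congr t (hr h1)]
                  simp only [div_eq_mul_inv, mul_inv]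
                  ring
                · simp [h2]
              · simp [h1]
          _ ≤ S.p a / S.cls t a * S.p b * 1 := by
              rw [← Finset.mul_sum]
              exact mul_le_mul_of_nonneg_left (S.sum_block_le r s a b) hnn
          _ = _ := mul_one _
      · rw [if_neg hab, mul_zero]
        refine (Finset.sum_eq_zero fun ω _ => ?_).le
        by_cases h1 : r a ω
        · have h2 : ¬ s b ω := fun h2 => hab (t.trans (hs h2) (t.symm (hr h1)))
          simp [h2]
        · simp [h1]
    refine (Finset.sum_le_sum fun b _ => e3 b).trans ?_
    rw [← Finset.mul_sum]
    change S.p a / S.cls t a * S.cls t a ≤ S.p a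
    rw [div_mul_eq_mul_div, mul_div_assoc]
    exact mul_le_of_le_one_right (S.p_nonneg a) (div_self_le_one _)
  exact (Finset.sum_le_sum fun a _ => e2 a).trans S.p_sum.le

/-- Submodularity of entropy, i.e. nonnegativity of conditional mutual information; it follows
from `log x ≤ x - 1` and `sum_ratio_le`. -/
lemma ent_submod {r s t : Setoid S.Ω} (hr : r ≤ t) (hs : s ≤ t) :
    S.ent (r ⊓ s) + S.ent t ≤ S.ent r + S.ent s := by
  have key : ∀ ω, S.p ω * Real.log (S.cls r ω) + S.p ω * Real.log (S.cls s ω)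
      - S.p ω * Real.log (S.cls (r ⊓ s) ω) - S.p ω * Real.log (S.cls t ω)
      ≤ S.p ω * (S.cls r ω * S.cls s ω / (S.cls (r ⊓ s) ω * S.cls t ω)) - S.p ω := by
    intro ω
    rcases (S.p_nonneg ω).eq_or_lt with h0 | h0
    · simp [← h0]
    · have h1 := h0.trans_le (S.p_le_cls r ω)
      have h2 := h0.trans_le (S.p_le_cls s ω)
      have h3 := h0.trans_le (S.p_le_cls (r ⊓ s) ω)
      have h4 := h0.trans_le (S.p_le_cls t ω)
      have hlog := Real.log_le_sub_one_of_pos (div_pos (mul_pos h1 h2) (mul_pos h3 h4))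
      rw [Real.log_div (mul_pos h1 h2).ne' (mul_pos h3 h4).ne', Real.log_mul h1.ne' h2.ne',
        Real.log_mul h3.ne' h4.ne'] at hlog
      have := mul_le_mul_of_nonneg_left hlog h0.le
      linarith
  have hsum := Finset.sum_le_sum fun ω (_ : ω ∈ Finset.univ) => key ω
  simp only [Finset.sum_sub_distrib, Finset.sum_add_distrib] at hsum
  have := S.sum_ratio_le r s t hr hs
  have := S.p_sum
  simp only [ent]
  linarith

lemma entc_nonneg (r s : Setoid S.Ω) : 0 ≤ S.entc r s :=
  sub_nonneg.2 (S.ent_anti inf_le_right)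

lemma entc_mono {r r' : Setoid S.Ω} (h : r ≤ r') (s : Setoid S.Ω) : S.entc r' s ≤ S.entc r s :=
  sub_le_sub_right (S.ent_anti (inf_le_inf_right s h)) _

/-- Conditioning on more reduces entropy. -/
lemma entc_cond (r : Setoid S.Ω) {s s' : Setoid S.Ω} (h : s' ≤ s) : S.entc r s' ≤ S.entc r s := by
  have := S.ent_submod (r := r ⊓ s) (s := s') (t := s) inf_le_right h
  rw [inf_assoc, inf_eq_right.2 h] at this
  simp only [entc]
  linarith

/-- The chain rule for entropy. -/
lemma entc_chain (r s t : Setoid S.Ω) :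
    S.entc (r ⊓ s) t = S.entc s t + S.entc r (s ⊓ t) := by
  simp only [entc, inf_assoc]
  ring

lemma entc_inf_le (r s t : Setoid S.Ω) : S.entc (r ⊓ s) t ≤ S.entc r t + S.entc s t := by
  have := S.entc_cond r (inf_le_right : s ⊓ t ≤ t)
  rw [entc_chain]
  linarith

lemma entc_finset_inf_le (T : Finset ℕ) (f : ℕ → Setoid S.Ω) (t : Setoid S.Ω) :
    S.entc (T.inf f) t ≤ ∑ i ∈ T, S.entc (f i) t := by
  induction T using Finset.induction_on with
  | empty => simp [entc]
  | insert i T hi ih =>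
    rw [Finset.inf_insert, Finset.sum_insert hi]
    exact (S.entc_inf_le _ _ _).trans (by linarith)

lemma entc_top (r : Setoid S.Ω) : S.entc r ⊤ = S.ent r := by
  simp [entc, ent_top]

lemma entc_eq_zero_of_le {r s s' : Setoid S.Ω} (h : s' ≤ s) (h0 : S.entc r s = 0) :
    S.entc r s' = 0 :=
  le_antisymm ((S.entc_cond r h).trans h0.le) (S.entc_nonneg _ _)

/-- Variables that are already determined do not affect the conditioning. -/
lemma entc_inf_of_det (a : Setoid S.Ω) {r t : Setoid S.Ω} (h : S.entc r t = 0) :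
    S.entc a (r ⊓ t) = S.entc a t := by
  have e1 := S.entc_chain a r t
  have e2 := S.entc_chain r a t
  have e3 := S.entc_eq_zero_of_le (inf_le_right : a ⊓ t ≤ t) h
  rw [inf_comm] at e2
  linarith

/-- A lower bound for a joint entropy: along an increasing sequence of conditionings `C i` such
that `C (i + 1)` determines `A i`, the innovations `H(A i | C i)` add up. -/
lemma sum_entc_le (A C : ℕ → Setoid S.Ω) (hC : ∀ i, C (i + 1) ≤ C i)
    (hA : ∀ i, S.entc (A i) (C (i + 1)) = 0) (m : ℕ) :
    ∑ i ∈ Finset.range m, S.entc (A i) (C i) ≤ S.entc ((Finset.range m).inf A) (C 0) ∧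
      S.entc ((Finset.range m).inf A) (C m) = 0 := by
  induction m with
  | zero => simp [entc]
  | succ m ih =>
    obtain ⟨ih1, ih2⟩ := ih
    rw [Finset.range_add_one, Finset.inf_insert, Finset.sum_insert Finset.notMem_range_self]
    set R := (Finset.range m).inf A
    have hanti : C m ≤ C 0 := (antitone_nat_of_succ_le hC) (Nat.zero_le m)
    constructor
    · rw [entc_chain]
      have h1 := S.entc_cond (A m) (inf_le_inf_left R hanti)
      -- since `C m` determines `R`, adding `R` to the conditioning changes nothing
      rw [S.entc_inf_of_det _ ih2] at h1
      linarith
    · refine le_antisymm ((S.entc_inf_le _ _ _).trans ?_) (S.entc_nonneg _ _)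
      rw [hA m, S.entc_eq_zero_of_le (hC m) ih2, add_zero]

/-! ### Messages, queries and answers of a valid scheme -/

/-- The partition generated by the messages with index in `T`. -/
def wS (T : Finset ℕ) : Setoid S.Ω := T.inf fun j => Setoid.ker (S.W j)

/-- The partition generated by the answer of server `n` when message `k` is retrieved. -/
def aS (n k : ℕ) : Setoid S.Ω := Setoid.ker (S.A n k)

/-- The partition generated by all answers when message `k` is retrieved. -/
def ansS (k : ℕ) : Setoid S.Ω := (Finset.Icc 1 N).inf fun n => S.aS n k

/-- The partition generated by all queries. -/
def qS : Setoid S.Ω := Setoid.ker S.allQ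

lemma wS_anti {T U : Finset ℕ} (h : T ⊆ U) : S.wS U ⊓ S.qS ≤ S.wS T ⊓ S.qS :=
  inf_le_inf_right _ (Finset.inf_mono h)

lemma ker_jointW (T : Finset ℕ) : Setoid.ker (S.jointW T) = S.wS T := ker_pi S.W T

lemma ker_ansVec (k : ℕ) : Setoid.ker (S.ansVec k) = S.ansS k := ker_pi (fun n => S.A n k) _

namespace IsValid

variable {S} {I P : ℕ → Finset ℕ} (hS : S.IsValid I P)

include hS

lemma entc_wS_le {T : Finset ℕ} (hT : T ⊆ Finset.Icc 1 K) :
    S.entc (S.wS T) S.qS ≤ T.card * L := by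
  refine (S.entc_finset_inf_le T _ _).trans ?_
  rw [← nsmul_eq_mul, ← Finset.sum_const]
  refine Finset.sum_le_sum fun i hi => ?_
  have h := hS.msg_entropy i (hT hi)
  rw [H_eq, ← entc_top] at h
  exact (S.entc_cond _ le_top).trans h.le

lemma entc_wS_all : S.entc (S.wS (Finset.Icc 1 K)) S.qS = K * L := by
  have h1 := hS.msg_indep
  rw [Finset.sum_congr rfl hS.msg_entropy] at h1
  have h2 := hS.query_indep
  simp only [MI, H_eq, ker_prod] at h1 h2
  simp only [allW, ker_jointW, Finset.sum_const, nsmul_eq_mul, Nat.card_Icc,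
    Nat.add_sub_cancel] at h1 h2
  simp only [entc]
  unfold qS
  linarith

/-- Given the queries, the messages are still independent, each of entropy `L`. -/
lemma entc_wS {T : Finset ℕ} (hT : T ⊆ Finset.Icc 1 K) :
    S.entc (S.wS T) S.qS = T.card * L := by
  refine le_antisymm (hS.entc_wS_le hT) ?_
  have h1 := hS.entc_wS_all
  have h2 := hS.entc_wS_le (Finset.sdiff_subset : Finset.Icc 1 K \ T ⊆ _)
  have h3 : S.wS (Finset.Icc 1 K) = S.wS T ⊓ S.wS (Finset.Icc 1 K \ T) := by
    rw [wS, wS, wS, ← Finset.inf_union, Finset.union_sdiff_of_subset hT]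
  have h4 := S.entc_inf_le (S.wS T) (S.wS (Finset.Icc 1 K \ T)) S.qS
  have h5 : (((Finset.Icc 1 K \ T).card : ℕ) : ℝ) + T.card = K := by
    rw [← Nat.cast_add, Finset.card_sdiff_add_card_eq_card hT]
    simp
  rw [← h3, h1, ← h5] at h4
  linarith

lemma ent_wS {T : Finset ℕ} (hT : T ⊆ Finset.Icc 1 K) :
    S.ent (S.wS T ⊓ S.qS) = T.card * L + S.ent S.qS := by
  have := hS.entc_wS hT
  simp only [entc] at this
  linarith

lemma aS_det {n k : ℕ} (hn : n ∈ Finset.Icc 1 N) (hk : k ∈ Finset.Icc 1 K) :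
    S.entc (S.aS n k) (S.wS (I n) ⊓ S.qS) = 0 := by
  have h := hS.ans_det n hn k hk
  rw [Hc_eq, ker_prod, ker_jointW] at h
  refine S.entc_eq_zero_of_le (inf_le_inf_left _ ?_) h
  intro a b hab
  exact congrFun hab ⟨(n, k), Finset.mem_product.2 ⟨hn, hk⟩⟩

lemma aS_priv {n θ₁ θ₂ : ℕ} (hn : n ∈ Finset.Icc 1 N) (h₁ : θ₁ ∈ P n) (h₂ : θ₂ ∈ P n)
    {T : Finset ℕ} (hT : T ⊆ Finset.Icc 1 K) :
    S.entc (S.aS n θ₁) (S.wS T ⊓ S.qS) = S.entc (S.aS n θ₂) (S.wS T ⊓ S.qS) := by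
  have h := hS.privacy n hn θ₁ h₁ θ₂ h₂ T hT
  rw [Hc_eq, Hc_eq, ker_prod, ker_jointW] at h
  exact h

lemma dec {k : ℕ} (hk : k ∈ Finset.Icc 1 K) : S.entc (S.wS {k}) (S.ansS k ⊓ S.qS) = 0 := by
  have h := hS.decodable k hk
  rw [Hc_eq, ker_prod, ker_ansVec] at h
  simpa [wS, qS] using h

/-- An answer that depends on the messages `u` and `v` only is as uncertain given any set of
messages that contains `v` but not `u` as it is given `v` alone. -/
lemma entc_le_of_notMem {T : Finset ℕ} (hT : T ⊆ Finset.Icc 1 K) {u v : ℕ}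
    (hu : u ∈ Finset.Icc 1 K) (huT : u ∉ T) (hv : v ∈ T) {a : Setoid S.Ω}
    (ha : S.entc a (S.wS {u, v} ⊓ S.qS) = 0) :
    S.entc a (S.wS {v} ⊓ S.qS) ≤ S.entc a (S.wS T ⊓ S.qS) := by
  have huv : u ≠ v := fun h => huT (h ▸ hv)
  have i1 := hS.ent_wS hT
  have i2 := hS.ent_wS (Finset.insert_subset hu hT)
  have i3 := hS.ent_wS (T := {v}) (Finset.singleton_subset_iff.2 (hT hv))
  have i4 := hS.ent_wS (T := {u, v})
    (Finset.insert_subset hu (Finset.singleton_subset_iff.2 (hT hv)))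
  rw [Finset.card_insert_of_notMem huT] at i2
  rw [Finset.card_singleton] at i3
  rw [Finset.card_pair huv] at i4
  have hsub := S.ent_submod (r := a ⊓ (S.wS T ⊓ S.qS)) (s := a ⊓ (S.wS {u, v} ⊓ S.qS))
    (t := a ⊓ (S.wS {v} ⊓ S.qS))
    (inf_le_inf_left _ (S.wS_anti (Finset.singleton_subset_iff.2 hv)))
    (inf_le_inf_left _ (S.wS_anti (by simp)))
  have hge : S.ent (S.wS (insert u T) ⊓ S.qS)
      ≤ S.ent (a ⊓ (S.wS T ⊓ S.qS) ⊓ (a ⊓ (S.wS {u, v} ⊓ S.qS))) := by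
    refine S.ent_anti (le_inf ?_ ?_)
    · have : S.wS (insert u T) = Setoid.ker (S.W u) ⊓ S.wS T := Finset.inf_insert
      rw [this]
      refine le_inf ?_ ?_
      · exact inf_le_right.trans (inf_le_right.trans (inf_le_left.trans
          (Finset.inf_le (Finset.mem_insert_self _ _))))
      · exact inf_le_left.trans (inf_le_right.trans inf_le_left)
    · exact inf_le_left.trans (inf_le_right.trans inf_le_right)
  simp only [entc] at ha ⊢
  push_cast at i2 i3 i4
  linarith

/-- Download splits into the desired message and the interference of the others. -/
lemma D_ge {k : ℕ} (hk : k ∈ Finset.Icc 1 K) :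
    L + S.entc (S.ansS k) (S.wS {k} ⊓ S.qS) ≤ S.D k := by
  have h1 : S.entc (S.ansS k) S.qS ≤ S.D k := by
    refine (S.entc_cond _ le_top).trans ((S.entc_finset_inf_le _ _ _).trans ?_)
    exact Finset.sum_le_sum fun n _ => (S.entc_top _).le
  have h2 := S.entc_chain (S.ansS k) (S.wS {k}) S.qS
  have h3 := S.entc_chain (S.wS {k}) (S.ansS k) S.qS
  have h4 := hS.entc_wS (T := {k}) (Finset.singleton_subset_iff.2 hk)
  rw [inf_comm, hS.dec hk] at h3
  simp only [Finset.card_singleton, Nat.cast_one, one_mul] at h4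
  linarith

/-- Given all other messages, the answers still have to convey message `k`. -/
lemma L_le {k : ℕ} (hk : k ∈ Finset.Icc 1 K) :
    L ≤ ∑ n ∈ Finset.Icc 1 N, S.entc (S.aS n k) (S.wS (Finset.Icc 1 K \ {k}) ⊓ S.qS) := by
  refine le_trans ?_ (S.entc_finset_inf_le _ _ _)
  change L ≤ S.entc (S.ansS k) _
  have hsub : {k} ⊆ Finset.Icc 1 K := Finset.singleton_subset_iff.2 hk
  set U := Finset.Icc 1 K \ {k} with hU
  have i1 := hS.ent_wS (Finset.sdiff_subset : U ⊆ Finset.Icc 1 K)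
  have i2 := hS.ent_wS (Finset.Subset.refl (Finset.Icc 1 K))
  have h3 : S.wS (Finset.Icc 1 K) = S.wS {k} ⊓ S.wS U := by
    rw [wS, wS, wS, ← Finset.inf_union, Finset.union_sdiff_of_subset hsub]
  have hdec : S.entc (S.wS {k}) (S.ansS k ⊓ (S.wS U ⊓ S.qS)) = 0 :=
    S.entc_eq_zero_of_le (inf_le_inf_left _ inf_le_right) (hS.dec hk)
  have hge : S.ent (S.wS (Finset.Icc 1 K) ⊓ S.qS)
      ≤ S.ent (S.wS {k} ⊓ (S.ansS k ⊓ (S.wS U ⊓ S.qS))) := by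
    rw [h3, inf_assoc]
    exact S.ent_anti (inf_le_inf_left _ inf_le_right)
  have h5 : (U.card : ℝ) + 1 = (Finset.Icc 1 K).card := by
    rw [← Finset.card_sdiff_add_card_eq_card hsub]
    simp [hU]
  rw [← h5] at i2
  simp only [entc] at hdec ⊢
  linarith

end IsValid

end PIRScheme

/-! ### Arithmetic of cyclic indices -/

lemma cyc_mem {N : ℕ} (hN : 0 < N) (m : ℤ) : cyc N m ∈ Finset.Icc 1 N := by
  have h1 := Int.emod_nonneg (m - 1) (by omega : (N : ℤ) ≠ 0)
  have h2 := Int.emod_lt_of_pos (m - 1) (by omega : (0 : ℤ) < N)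
  rw [Finset.mem_Icc, cyc]
  omega

lemma cyc_cast {N : ℕ} (hN : 0 < N) (m : ℤ) : (cyc N m : ℤ) = (m - 1) % N + 1 := by
  have h1 := Int.emod_nonneg (m - 1) (by omega : (N : ℤ) ≠ 0)
  rw [cyc]
  omega

lemma cyc_eq_iff {N : ℕ} (hN : 0 < N) (a b : ℤ) : cyc N a = cyc N b ↔ (N : ℤ) ∣ a - b := by
  have h : a - b = (a - 1) - (b - 1) := by ring
  rw [← Int.natCast_inj, cyc_cast hN, cyc_cast hN, add_left_inj, h, dvd_sub_comm,
    ← Int.modEq_iff_dvd, Int.ModEq]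

lemma cyc_self {N n : ℕ} (hn : n ∈ Finset.Icc 1 N) : cyc N n = n := by
  rw [Finset.mem_Icc] at hn
  rw [← Int.natCast_inj, cyc_cast (by omega), Int.emod_eq_of_lt (by omega) (by omega)]
  ring

lemma cyc_cyc_add {N : ℕ} (hN : 0 < N) (m c : ℤ) : cyc N ((cyc N m : ℕ) + c) = cyc N (m + c) := by
  rw [cyc_eq_iff hN, add_sub_add_right_eq_sub, ← cyc_eq_iff hN, cyc_self (cyc_mem hN m)]

lemma cyc_ne {N : ℕ} (hN : 0 < N) {a b : ℤ} (h1 : b < a) (h2 : a - b < N) :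
    cyc N a ≠ cyc N b := by
  rw [Ne, cyc_eq_iff hN]
  intro h
  have := Int.le_of_dvd (by omega) h
  omega

lemma sum_cyc {N : ℕ} (hN : 0 < N) (c : ℤ) (f : ℕ → ℝ) :
    ∑ k ∈ Finset.Icc 1 N, f (cyc N ((k : ℤ) + c)) = ∑ k ∈ Finset.Icc 1 N, f k := by
  refine Finset.sum_nbij' (fun k => cyc N ((k : ℤ) + c)) (fun k => cyc N ((k : ℤ) + -c))
    (fun k _ => cyc_mem hN _) (fun k _ => cyc_mem hN _) ?_ ?_ (fun k _ => rfl)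
  · intro k hk
    rw [cyc_cyc_add hN, add_neg_cancel_right, cyc_self hk]
  · intro k hk
    rw [cyc_cyc_add hN, neg_add_cancel_right, cyc_self hk]

/-! ### Cyclic storage with two-sided privacy -/

namespace PIRScheme

variable {N h : ℕ} {L : ℝ} {S : PIRScheme N N L}

/-- The uncertainty of the answer of server `n` about message `n - 1`, i.e. given message `n`. -/
def yS (S : PIRScheme N N L) (n : ℕ) : ℝ := S.entc (S.aS n n) (S.wS {n} ⊓ S.qS)

/-- The uncertainty of the answer of server `n` about message `n`, i.e. given message `n - 1`. -/
def xS (S : PIRScheme N N L) (n : ℕ) : ℝ :=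
  S.entc (S.aS n n) (S.wS {cyc N ((n : ℤ) - 1)} ⊓ S.qS)

lemma mem_cycInterval (hN : 0 < N) {m : ℤ} {k : ℕ} (hk : k ∈ Finset.Icc 1 N)
    (h1 : m - h - 1 ≤ k) (h2 : (k : ℤ) ≤ m + h) :
    k ∈ cycInterval N (((cyc N m : ℕ) : ℤ) - h - 1) (2 * h + 2) := by
  -- the range in `cycInterval` is coerced elementwise to a `Finset ℤ`, hence the nested membership
  have hr : (((k - (m - h - 1)).toNat : ℕ) : ℤ) ∈
      (do let a ← Finset.range (2 * h + 2); pure (a : ℤ) : Finset ℤ) := by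
    simp only [Finset.bind_def, Finset.pure_def, Finset.mem_sup]
    exact ⟨_, Finset.mem_range.2 (by omega), Finset.mem_singleton_self _⟩
  refine Finset.mem_image.2 ⟨_, hr, ?_⟩
  have e : ((cyc N m : ℕ) : ℤ) - h - 1 + ((k - (m - h - 1)).toNat : ℕ) = (cyc N m : ℕ) + (k - m) := by
    omega
  rw [e, cyc_cyc_add hN, add_sub_cancel, cyc_self hk]

section

variable (hS : S.IsValid (cycIndex N) (fun n => cycInterval N ((n : ℤ) - (h : ℤ) - 1) (2 * h + 2)))

include hS

/-- By privacy, the answer for a message `k` in the privacy interval of server `m` may be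
replaced by the one for message `m`. -/
lemma aS_eq (hN : 0 < N) {m : ℤ} {k : ℕ} (hk : k ∈ Finset.Icc 1 N)
    (h1 : m - h - 1 ≤ k) (h2 : (k : ℤ) ≤ m + h) (v : ℤ) :
    S.entc (S.aS (cyc N m) k) (S.wS {cyc N v} ⊓ S.qS)
      = S.entc (S.aS (cyc N m) (cyc N m)) (S.wS {cyc N v} ⊓ S.qS) := by
  have hm := cyc_mem hN m
  have hself := mem_cycInterval (h := h) (m := cyc N m) hN hm (by omega) (by omega)
  rw [cyc_self hm] at hself
  exact hS.aS_priv hm (mem_cycInterval hN hk h1 h2) hself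
    (Finset.singleton_subset_iff.2 (cyc_mem hN v))

lemma aS_det_cyc (hN : 0 < N) (m : ℤ) {k : ℕ} (hk : k ∈ Finset.Icc 1 N) :
    S.entc (S.aS (cyc N m) k) (S.wS {cyc N (m - 1), cyc N m} ⊓ S.qS) = 0 := by
  have := hS.aS_det (cyc_mem hN m) hk
  rwa [cycIndex, sub_eq_add_neg, cyc_cyc_add hN, cyc_self (cyc_mem hN m), ← sub_eq_add_neg] at this

/-- The interference in the retrieval of message `k`: given `W k`, reveal the messages
`k - 1, k - 2, …` one at a time, and then the messages `k + 1, k + 2, …`. Each newly revealed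
message completes the storage of one more server, whose answer is fresh until then. -/
lemma interference (hh : 2 * h + 3 ≤ N) {k : ℕ} (hk : k ∈ Finset.Icc 1 N) :
    ∑ i ∈ Finset.range (h + 1), (S.yS (cyc N ((k : ℤ) - i)) + S.xS (cyc N ((k : ℤ) + (1 + i))))
      ≤ S.entc (S.ansS k) (S.wS {k} ⊓ S.qS) := by
  have hN : 0 < N := by omega
  -- indices of the messages `k - i, …, k`
  set Lf : ℕ → Finset ℕ := fun i => (Finset.range (i + 1)).image fun t : ℕ => cyc N ((k : ℤ) - t)
    with hLf
  -- indices of the messages `k - h - 1, …, k + i`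
  set Rt : ℕ → Finset ℕ :=
    fun i => (Finset.range (h + 2 + i)).image fun t : ℕ => cyc N ((k : ℤ) - h - 1 + t) with hRt
  have memLf : ∀ (i : ℕ) (m : ℤ), m ≤ k → k - i ≤ m → cyc N m ∈ Lf i := fun i m h1 h2 =>
    Finset.mem_image.2 ⟨(k - m).toNat, Finset.mem_range.2 (by omega), by congr 1; omega⟩
  have memRt : ∀ (i : ℕ) (m : ℤ), m ≤ k + i → k - h - 1 ≤ m → cyc N m ∈ Rt i := fun i m h1 h2 =>
    Finset.mem_image.2 ⟨(m - (k - h - 1)).toNat, Finset.mem_range.2 (by omega),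
      by congr 1; omega⟩
  have subLf : ∀ i, Lf i ⊆ Finset.Icc 1 N := fun i => Finset.image_subset_iff.2
    fun t _ => cyc_mem hN _
  have subRt : ∀ i, Rt i ⊆ Finset.Icc 1 N := fun i => Finset.image_subset_iff.2
    fun t _ => cyc_mem hN _
  set AL : ℕ → Setoid S.Ω := fun i => S.aS (cyc N ((k : ℤ) - i)) k with hAL
  set AR : ℕ → Setoid S.Ω := fun i => S.aS (cyc N ((k : ℤ) + (1 + i))) k with hAR
  have cL := S.sum_entc_le AL (fun i => S.wS (Lf i) ⊓ S.qS)
    (fun i => S.wS_anti (Finset.image_subset_image (Finset.range_mono (by omega))))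
    (fun i => S.entc_eq_zero_of_le (S.wS_anti (Finset.insert_subset
      (memLf _ _ (by omega) (by push_cast; omega))
      (Finset.singleton_subset_iff.2 (memLf _ _ (by omega) (by push_cast; omega)))))
      (aS_det_cyc hS hN _ hk)) (h + 1)
  have cR := S.sum_entc_le AR (fun i => S.wS (Rt i) ⊓ S.qS)
    (fun i => S.wS_anti (Finset.image_subset_image (Finset.range_mono (by omega))))
    (fun i => S.entc_eq_zero_of_le (S.wS_anti (Finset.insert_subset
      (memRt _ _ (by push_cast; omega) (by omega))
      (Finset.singleton_subset_iff.2 (memRt _ _ (by push_cast; omega) (by omega)))))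
      (aS_det_cyc hS hN _ hk)) (h + 1)
  have lowL : ∀ i ∈ Finset.range (h + 1), S.yS (cyc N ((k : ℤ) - i))
      ≤ S.entc (AL i) (S.wS (Lf i) ⊓ S.qS) := by
    intro i hi
    rw [Finset.mem_range] at hi
    rw [yS, ← aS_eq hS hN hk (m := (k : ℤ) - i) (by omega) (by omega)]
    refine hS.entc_le_of_notMem (subLf i) (cyc_mem hN ((k : ℤ) - i - 1)) ?_
      (memLf _ _ (by omega) (by omega)) (aS_det_cyc hS hN _ hk)
    intro hmem
    obtain ⟨t, ht, hte⟩ := Finset.mem_image.1 hmem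
    rw [Finset.mem_range] at ht
    exact cyc_ne hN (by omega) (by omega) hte
  have lowR : ∀ i ∈ Finset.range (h + 1), S.xS (cyc N ((k : ℤ) + (1 + i)))
      ≤ S.entc (AR i) (S.wS (Rt i) ⊓ S.qS) := by
    intro i hi
    rw [Finset.mem_range] at hi
    rw [xS, sub_eq_add_neg, cyc_cyc_add hN,
      ← aS_eq hS hN hk (m := (k : ℤ) + (1 + i)) (by omega) (by omega), ← sub_eq_add_neg]
    have hdet := aS_det_cyc hS hN ((k : ℤ) + (1 + i)) hk
    rw [Finset.pair_comm] at hdet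
    refine hS.entc_le_of_notMem (subRt i) (cyc_mem hN ((k : ℤ) + (1 + i))) ?_
      (memRt _ _ (by omega) (by omega)) hdet
    intro hmem
    obtain ⟨t, ht, hte⟩ := Finset.mem_image.1 hmem
    rw [Finset.mem_range] at ht
    exact cyc_ne hN (by omega) (by omega) hte.symm
  have hL0 : S.wS (Lf 0) = S.wS {k} := by
    simp [hLf, cyc_self hk]
  have hR0 : S.wS (Rt 0) ⊓ S.qS ≤ S.wS {k} ⊓ S.qS := by
    refine S.wS_anti (Finset.singleton_subset_iff.2 ?_)
    have := memRt 0 k (by omega) (by omega)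
    rwa [cyc_self hk] at this
  have hLR : S.wS (Rt 0) ⊓ S.qS ≤ S.wS (Lf (h + 1)) ⊓ S.qS := by
    refine S.wS_anti (Finset.image_subset_iff.2 fun t ht => ?_)
    rw [Finset.mem_range] at ht
    exact memRt _ _ (by omega) (by omega)
  set TL := (Finset.range (h + 1)).inf AL
  set TR := (Finset.range (h + 1)).inf AR
  have hans : S.ansS k ≤ TR ⊓ TL :=
    le_inf (Finset.le_inf fun i _ => Finset.inf_le (cyc_mem hN _))
      (Finset.le_inf fun i _ => Finset.inf_le (cyc_mem hN _))
  have h1 := S.entc_mono hans (S.wS {k} ⊓ S.qS)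
  rw [entc_chain] at h1
  have h2 := S.entc_cond TR (inf_le_inf_left TL hR0)
  rw [S.entc_inf_of_det _ (S.entc_eq_zero_of_le hLR cL.2)] at h2
  have h3 := (Finset.sum_le_sum lowL).trans cL.1
  have h4 := (Finset.sum_le_sum lowR).trans cR.1
  rw [hL0] at h3
  rw [Finset.sum_add_distrib]
  linarith

/-- Message `k` is conveyed by its two servers `k` and `k + 1`. -/
lemma L_le_xS_add_yS (hh : 2 * h + 3 ≤ N) {k : ℕ} (hk : k ∈ Finset.Icc 1 N) :
    L ≤ S.xS k + S.yS (cyc N ((k : ℤ) + 1)) := by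
  have hN : 0 < N := by omega
  have hck := cyc_self hk
  set k' := cyc N ((k : ℤ) + 1) with hk'
  have hk'm : k' ∈ Finset.Icc 1 N := cyc_mem hN _
  have hkk' : k ≠ k' := by
    rw [← hck, hk']
    exact (cyc_ne hN (by omega) (by omega)).symm
  set U := Finset.Icc 1 N \ {k} with hU
  have memU : ∀ m : ℤ, cyc N m ≠ k → cyc N m ∈ U := fun m hm =>
    Finset.mem_sdiff.2 ⟨cyc_mem hN m, by simpa using hm⟩
  have h0 := hS.L_le hk
  rw [← Finset.sum_subset (s₁ := {k, k'})
    (Finset.insert_subset hk (Finset.singleton_subset_iff.2 hk'm)), Finset.sum_pair hkk'] at h0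
  · have hx : S.entc (S.aS k k) (S.wS U ⊓ S.qS) ≤ S.xS k := by
      refine S.entc_cond _ (S.wS_anti (Finset.singleton_subset_iff.2 (memU _ ?_)))
      conv_rhs => rw [← hck]
      exact (cyc_ne hN (by omega) (by omega)).symm
    have hy : S.entc (S.aS k' k) (S.wS U ⊓ S.qS) ≤ S.yS k' := by
      rw [yS, hk', ← aS_eq hS hN hk (m := (k : ℤ) + 1) (by omega) (by omega)]
      exact S.entc_cond _ (S.wS_anti (Finset.singleton_subset_iff.2 (memU _ hkk'.symm)))
    linarith
  · -- any other server stores neither copy of message `k`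
    intro n hn hnk
    simp only [Finset.mem_insert, Finset.mem_singleton, not_or] at hnk
    have hcn := cyc_self hn
    refine S.entc_eq_zero_of_le (S.wS_anti ?_) (hS.aS_det hn hk)
    refine Finset.insert_subset (memU _ ?_) (Finset.singleton_subset_iff.2 (memU _ ?_))
    · intro he
      apply hnk.2
      rw [hk', ← he, cyc_cyc_add hN, sub_add_cancel, hcn]
    · rw [hcn]
      exact hnk.1

end

end PIRScheme

/-- **Converse part of Theorem 7** (cyclic graph with two-sided `h`-neighbor
privacy): for every `N ≥ 3`, every `h ∈ {0, 1, …, ⌊(N-3)/2⌋}`, and every PIR scheme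
with cyclic-graph storage on `N` servers and privacy sets
`𝒫_n = [n-h-1 : n+h] (mod N)`, the total download cost satisfies
`∑_{k=1}^N D k ≥ (h+2) N L`; equivalently, `R ≤ 1/(h+2)`. -/
theorem cyclic_twoSided_hNeighbor_converse (N h : ℕ) (hN : 3 ≤ N)
    (hh : 2 * h + 3 ≤ N) (L : ℝ) (hL : 0 < L)
    (S : PIRScheme N N L)
    (hS : S.IsValid (cycIndex N)
      (fun n => cycInterval N ((n : ℤ) - (h : ℤ) - 1) (2 * h + 2))) :
    ((h : ℝ) + 2) * (N : ℝ) * L ≤ ∑ k ∈ Finset.Icc 1 N, S.D k ∧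
      S.rate ≤ 1 / ((h : ℝ) + 2) := by
  have hN0 : 0 < N := by omega
  have main : ((h : ℝ) + 2) * (N : ℝ) * L ≤ ∑ k ∈ Finset.Icc 1 N, S.D k := by
    have e1 := Finset.sum_le_sum fun k hk => (add_le_add_right
      (PIRScheme.interference hS hh hk) L).trans (hS.D_ge hk)
    have e2 := Finset.sum_le_sum fun k hk => PIRScheme.L_le_xS_add_yS hS hh hk
    have hy : ∀ i : ℕ, ∑ k ∈ Finset.Icc 1 N, S.yS (cyc N ((k : ℤ) - i))
        = ∑ k ∈ Finset.Icc 1 N, S.yS k := fun i => by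
      simpa only [sub_eq_add_neg] using sum_cyc hN0 (-(i : ℤ)) S.yS
    have hx : ∀ i : ℕ, ∑ k ∈ Finset.Icc 1 N, S.xS (cyc N ((k : ℤ) + (1 + i)))
        = ∑ k ∈ Finset.Icc 1 N, S.xS k := fun i => sum_cyc hN0 _ S.xS
    rw [Finset.sum_add_distrib, sum_cyc hN0 1 S.yS] at e2
    rw [Finset.sum_add_distrib, Finset.sum_comm] at e1
    simp only [Finset.sum_add_distrib, hx, hy] at e1
    simp only [Finset.sum_const, nsmul_eq_mul, Nat.card_Icc, Nat.add_sub_cancel,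
      Finset.card_range] at e1 e2
    push_cast at e1 e2
    have e3 := mul_le_mul_of_nonneg_left e2 (by positivity : (0 : ℝ) ≤ (h : ℝ) + 1)
    linarith
  refine ⟨main, ?_⟩
  have hNL : 0 < (N : ℝ) * L := mul_pos (by exact_mod_cast hN0) hL
  have hpos : 0 < ((h : ℝ) + 2) * (N : ℝ) * L := by
    rw [mul_assoc]
    positivity
  rw [PIRScheme.rate, div_le_div_iff₀ (hpos.trans_le main) (by positivity)]
  linarith
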